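/- arXiv:2308.01110 — 2 statements merged into one kernel-verified Lean document; each statement's English description precedes it below -/
import Mathlib

section
/- Fix r : ℕ and let A := (Fin r → ℤ) with pointwise addition. For every function f : A → ℚ and every d : ℕ, f is a polynomial map of degree ≤ d if and only if there exists a polynomial P ∈ MvPolynomial (Fin r) ℚ with total degree ≤ d such that f(x) = eval (fun i => (x i : ℚ)) P for all x ∈ A; moreover such a polynomial P is unique. In particular, every ℚ-valued polynomial map on a finitely generated free abelian group is given by evaluating a polynomial with rational coefficients in linear coordinate functions, and conversely. -/
/-- The difference operator: `(D_a f)(x) = f (a + x) - f x`. -/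
def DOp {A B : Type*} [AddCommGroup A] [AddCommGroup B] (a : A) (f : A → B) : A → B :=
  fun x => f (a + x) - f x

/-- `f : A → B` is a polynomial map of degree `≤ n`. -/
def IsPolyDeg {A B : Type*} [AddCommGroup A] [AddCommGroup B] : ℕ → (A → B) → Prop
  | 0 => fun f => ∀ a x, DOp a f x = 0
  | n + 1 => fun f => ∀ a, IsPolyDeg n (DOp a f)

/-!
The product rule shows that evaluating a polynomial of total degree at most `d` in additive
coordinates gives a polynomial map of degree at most `d`. Conversely, Newton's forward difference
formula `f (n • a + x) = ∑ k ≤ d, (n choose k) • D_a^k f x` holds for every integer `n`; applied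
to one basis vector after another it writes `f` as a sum of products of binomial coefficients of
the coordinates, where a factor `n choose k` is paired with an iterated difference whose degree has
dropped by `k`. For uniqueness, composing with `ℚ`-linear functionals reduces to coefficients
in `ℚ`, where a polynomial is determined by its values at the integer points.
-/

open Finset MvPolynomial

namespace IsPolyDeg

section AddCommGroup

variable {A B C : Type*} [AddCommGroup A] [AddCommGroup B] [AddCommGroup C]
  {f g : A → B} {m n : ℕ}

theorem zero_iff : IsPolyDeg 0 f ↔ ∀ x, f x = f 0 := by
  refine ⟨fun hf x => ?_, fun hf a x => ?_⟩
  · simpa only [DOp, add_zero, sub_eq_zero] using hf x 0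
  · rw [DOp, hf, hf x, sub_self]

theorem const (n : ℕ) (b : B) : IsPolyDeg n (fun _ : A => b) := by
  induction n generalizing b with
  | zero => exact zero_iff.2 fun _ => rfl
  | succ n ih =>
    intro a
    rw [show DOp a (fun _ => b) = fun _ => 0 from funext fun _ => sub_self b]
    exact ih 0

protected theorem succ (hf : IsPolyDeg n f) : IsPolyDeg (n + 1) f := by
  induction n generalizing f with
  | zero =>
    intro a
    rw [show DOp a f = fun _ => 0 from funext (hf a)]
    exact const 0 0
  | succ n ih => exact fun a => ih (hf a)

theorem mono (hmn : m ≤ n) (hf : IsPolyDeg m f) : IsPolyDeg n f :=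
  Nat.le_induction hf (fun _ _ => IsPolyDeg.succ) n hmn

protected theorem add (hf : IsPolyDeg n f) (hg : IsPolyDeg n g) :
    IsPolyDeg n (fun x => f x + g x) := by
  induction n generalizing f g with
  | zero => exact zero_iff.2 fun x => by rw [zero_iff.1 hf, zero_iff.1 hg]
  | succ n ih =>
    intro a
    have DOp_add : DOp a (fun x => f x + g x) = fun x => DOp a f x + DOp a g x :=
      funext fun x => add_sub_add_comm (f (a + x)) (g (a + x)) (f x) (g x)
    rw [DOp_add]
    exact ih (hf a) (hg a)

theorem sum {ι : Type*} (s : Finset ι) {f : ι → A → B} (hf : ∀ i ∈ s, IsPolyDeg n (f i)) :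
    IsPolyDeg n (fun x => ∑ i ∈ s, f i x) := by
  rw [← Finset.sum_fn]
  exact Finset.sum_induction f (IsPolyDeg n) (fun _ _ => IsPolyDeg.add) (const n 0) hf

theorem comp_add_left (hf : IsPolyDeg n f) (a : A) : IsPolyDeg n (fun x => f (a + x)) := by
  induction n generalizing f with
  | zero => exact zero_iff.2 fun x => by rw [zero_iff.1 hf, zero_iff.1 hf (a + 0)]
  | succ n ih =>
    intro c
    simpa only [DOp, add_left_comm] using! ih (hf c)

theorem map (φ : B →+ C) (hf : IsPolyDeg n f) : IsPolyDeg n (fun x => φ (f x)) := by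
  induction n generalizing f with
  | zero => exact zero_iff.2 fun x => by rw [zero_iff.1 hf]
  | succ n ih =>
    intro a
    simpa only [DOp, map_sub] using! ih (hf a)

theorem of_addMonoidHom (φ : A →+ B) : IsPolyDeg 1 φ := by
  intro a
  rw [show DOp a φ = fun _ => φ a from funext fun x => by rw [DOp, map_add, add_sub_cancel_right]]
  exact const 0 (φ a)

theorem iterate_DOp {k : ℕ} (hf : IsPolyDeg (n + k) f) (a : A) : IsPolyDeg n ((DOp a)^[k] f) := by
  induction k generalizing f with
  | zero => exact hf
  | succ k ih => exact ih (hf a)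

theorem newton_forward (hf : IsPolyDeg n f) (a x : A) (z : ℤ) :
    f (z • a + x) = ∑ k ∈ range (n + 1), Ring.choose z k • (DOp a)^[k] f x := by
  induction n generalizing f z with
  | zero => simp [zero_iff.1 hf (z • a + x), zero_iff.1 hf x]
  | succ n ih =>
    let remainder : ℤ → B := fun z =>
      f (z • a + x) - ∑ k ∈ range (n + 2), Ring.choose z k • (DOp a)^[k] f x
    have remainder_periodic : remainder.Periodic 1 := by
      intro z
      have shift : f ((z + 1) • a + x) = f (z • a + x) + DOp a f (z • a + x) := by
        rw [DOp, add_sub_cancel, add_zsmul, one_zsmul, add_comm (z • a), add_assoc]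
      have pascal (k : ℕ) : Ring.choose (z + 1) (k + 1) • (DOp a)^[k + 1] f x =
          Ring.choose z k • (DOp a)^[k] (DOp a f) x +
            Ring.choose z (k + 1) • (DOp a)^[k + 1] f x := by
        rw [Ring.choose_succ_succ, add_zsmul, Function.iterate_succ_apply]
      simp only [remainder, sum_range_succ' _ (n + 1), pascal, sum_add_distrib, shift, ih (hf a),
        Ring.choose_zero_right]
      abel
    have remainder_zero : remainder 0 = 0 := by
      simp [remainder, sum_range_succ' _ (n + 1)]
    have remainder_eq_zero : remainder z = 0 := by
      simpa [remainder_zero] using remainder_periodic.zsmul_eq z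
    exact sub_eq_zero.1 remainder_eq_zero

end AddCommGroup

protected theorem mul {A R : Type*} [AddCommGroup A] [NonUnitalNonAssocRing R] {f g : A → R}
    {m n : ℕ} (hf : IsPolyDeg m f) (hg : IsPolyDeg n g) :
    IsPolyDeg (m + n) (fun x => f x * g x) := by
  induction m generalizing f g n with
  | zero =>
    simpa only [zero_add, zero_iff.1 hf] using! hg.map (AddMonoidHom.mulLeft (f 0))
  | succ m ihm =>
    induction n generalizing g with
    | zero => simpa only [zero_iff.1 hg] using! hf.map (AddMonoidHom.mulRight (g 0))
    | succ n ihn =>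
      intro a
      have leibniz : DOp a (fun x => f x * g x) =
          fun x => DOp a f x * g (a + x) + f x * DOp a g x := by
        funext x
        simp only [DOp, sub_mul, mul_sub, sub_add_sub_cancel]
      rw [leibniz]
      have left_deg : IsPolyDeg (m + 1 + n) (fun x => DOp a f x * g (a + x)) := by
        simpa only [Nat.succ_add_eq_add_succ] using ihm (hf a) (hg.comp_add_left a)
      exact left_deg.add (ihn (hg a))

theorem pow {A R : Type*} [AddCommGroup A] [Ring R] {f : A → R} {n : ℕ}
    (hf : IsPolyDeg n f) (k : ℕ) : IsPolyDeg (k * n) (fun x => f x ^ k) := by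
  induction k with
  | zero => simpa only [pow_zero] using const _ 1
  | succ k ih => simpa only [pow_succ, Nat.succ_mul] using ih.mul hf

section CommRing

variable {A R : Type*} [AddCommGroup A] [CommRing R]

theorem prod {ι : Type*} (s : Finset ι) {f : ι → A → R} {n : ι → ℕ}
    (hf : ∀ i ∈ s, IsPolyDeg (n i) (f i)) :
    IsPolyDeg (∑ i ∈ s, n i) (fun x => ∏ i ∈ s, f i x) := by
  induction s using Finset.cons_induction with
  | empty => exact const 0 1
  | cons i s hi ih =>
    rw [forall_mem_cons] at hf
    simpa only [prod_cons, sum_cons] using hf.1.mul (ih hf.2)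

theorem eval_mvPolynomial {σ : Type*} {c : σ → A → R} (hc : ∀ i, IsPolyDeg 1 (c i))
    (P : MvPolynomial σ R) : IsPolyDeg P.totalDegree (fun x => eval (fun i => c i x) P) := by
  simp only [eval_eq]
  refine sum _ fun t ht => ?_
  have monomial_deg : IsPolyDeg (∑ i ∈ t.support, t i * 1)
      (fun x => ∏ i ∈ t.support, c i x ^ t i) :=
    prod _ fun i _ => (hc i).pow (t i)
  simp only [mul_one] at monomial_deg
  exact (monomial_deg.map (AddMonoidHom.mulLeft (coeff t P))).mono (le_totalDegree ht)

end CommRing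

end IsPolyDeg

section RatAlgebra

variable {σ R : Type*} [CommRing R] [Algebra ℚ R]

theorem exists_mvPolynomial_eval_eq_choose (i : σ) (k : ℕ) :
    ∃ P : MvPolynomial σ R, P.totalDegree ≤ k ∧
      ∀ n : σ → ℤ, eval (fun j => (n j : R)) P = (Ring.choose (n i) k : ℤ) := by
  refine ⟨C (algebraMap ℚ R (k.factorial : ℚ)⁻¹) * ∏ j ∈ range k, (X i - C (j : R)), ?_,
    fun n => ?_⟩
  · have factor_deg (j : ℕ) : (X i - C (j : R)).totalDegree ≤ 1 :=
      (totalDegree_sub_C_le _ _).trans <|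
        (totalDegree_monomial_le _ _).trans_eq (Finsupp.sum_single_index rfl)
    calc _ ≤ _ := totalDegree_mul _ _
      _ ≤ 0 + ∑ _j ∈ range k, 1 := add_le_add (totalDegree_C _).le
        ((totalDegree_finsetProd _ _).trans (sum_le_sum fun j _ => factor_deg j))
      _ = k := by simp
  · have descFactorial_eq : ∏ j ∈ range k, (n i - j : ℤ) = k.factorial * Ring.choose (n i) k := by
      rw [← descPochhammer_eval_eq_prod_range, Polynomial.eval_eq_smeval,
        Ring.descPochhammer_eq_factorial_smul_choose, nsmul_eq_mul]
    have inv_mul : algebraMap ℚ R (k.factorial : ℚ)⁻¹ * k.factorial = 1 := by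
      rw [← map_natCast (algebraMap ℚ R), ← map_mul,
        inv_mul_cancel₀ (Nat.cast_ne_zero.2 k.factorial_ne_zero), map_one]
    calc _ = algebraMap ℚ R (k.factorial : ℚ)⁻¹ * ((∏ j ∈ range k, (n i - j : ℤ) : ℤ) : R) := by
          simp only [map_mul, map_prod, map_sub, eval_C, eval_X, Int.cast_prod, Int.cast_sub,
            Int.cast_natCast]
      _ = _ := by
        rw [descFactorial_eq, Int.cast_mul, Int.cast_natCast, ← mul_assoc, inv_mul, one_mul]

theorem mvPolynomial_eq_zero_of_eval_intCast {P : MvPolynomial σ R}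
    (hP : ∀ n : σ → ℤ, eval (fun i => (n i : R)) P = 0) : P = 0 := by
  ext t
  refine (Module.forall_dual_apply_eq_zero_iff ℚ _).1 fun φ => ?_
  let Q : MvPolynomial σ ℚ := ∑ u ∈ P.support, monomial u (φ (coeff u P))
  have eval_Q (n : σ → ℤ) : eval (fun i => (n i : ℚ)) Q = 0 := by
    calc _ = φ (eval (fun i => (n i : R)) P) := by
          rw [eval_eq _ P, map_sum, map_sum]
          refine sum_congr rfl fun u _ => ?_
          have power_product : ∏ i ∈ u.support, (n i : R) ^ u i =
              algebraMap ℚ R (∏ i ∈ u.support, (n i : ℚ) ^ u i) := by simp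
          rw [eval_monomial, power_product, mul_comm (coeff u P), ← Algebra.smul_def, map_smul,
            smul_eq_mul, mul_comm, Finsupp.prod]
      _ = 0 := by rw [hP, map_zero]
  have Q_eq_zero : Q = 0 := by
    refine funext_set (fun _ => Set.range (Int.cast : ℤ → ℚ))
      (fun _ => Set.infinite_range_of_injective Int.cast_injective) fun x hx => ?_
    choose n hn using fun i => hx i (Set.mem_univ i)
    rw [← funext hn, eval_Q, map_zero]
  have coeff_Q : coeff t Q = φ (coeff t P) := by
    classical
    simp +contextual [Q, coeff_sum, coeff_monomial]
  rw [← coeff_Q, Q_eq_zero, coeff_zero]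

theorem IsPolyDeg.exists_mvPolynomial_sum_zsmul {A : Type*} [AddCommGroup A] {f : A → R} {d : ℕ}
    (hf : IsPolyDeg d f) (v : σ → A) (s : Finset σ) :
    ∃ P : MvPolynomial σ R, P.totalDegree ≤ d ∧
      ∀ n : σ → ℤ, f (∑ i ∈ s, n i • v i) = eval (fun i => (n i : R)) P := by
  induction s using Finset.cons_induction generalizing f d with
  | empty => exact ⟨C (f 0), by simp, by simp⟩
  | cons i s hi ih =>
    have difference_eq_eval (k : range (d + 1)) : ∃ P : MvPolynomial σ R, P.totalDegree ≤ d - k ∧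
        ∀ n : σ → ℤ, (DOp (v i))^[k] f (∑ j ∈ s, n j • v j) = eval (fun j => (n j : R)) P := by
      have hk : d - k + k = d := Nat.sub_add_cancel (mem_range_succ_iff.1 k.2)
      exact ih (iterate_DOp (by rwa [hk]) (v i))
    choose P hPd hP using difference_eq_eval
    choose binom binom_deg eval_binom using exists_mvPolynomial_eval_eq_choose (R := R) i
    refine ⟨∑ k : range (d + 1), binom k * P k, ?_, fun n => ?_⟩
    · refine totalDegree_finsetSum_le fun k _ => (totalDegree_mul _ _).trans ?_
      calc _ ≤ k + (d - k) := add_le_add (binom_deg k) (hPd k)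
        _ = d := Nat.add_sub_cancel' (mem_range_succ_iff.1 k.2)
    · rw [sum_cons, hf.newton_forward, ← sum_coe_sort, map_sum]
      refine sum_congr rfl fun k _ => ?_
      rw [map_mul, eval_binom, ← hP, zsmul_eq_mul]

end RatAlgebra

theorem isPolyDeg_iff_mvPolynomial_general {ι A R : Type*} [Finite ι] [AddCommGroup A] [CommRing R]
    [Algebra ℚ R] (b : Module.Basis ι ℤ A) (f : A → R) (d : ℕ) :
    IsPolyDeg d f ↔ ∃! P : MvPolynomial ι R,
      P.totalDegree ≤ d ∧ ∀ x, f x = eval (fun i => (b.repr x i : R)) P := by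
  have := Fintype.ofFinite ι
  constructor
  · intro hf
    obtain ⟨P, hPd, hP⟩ := hf.exists_mvPolynomial_sum_zsmul b univ
    refine ⟨P, ⟨hPd, fun x => ?_⟩, fun Q ⟨_, hQ⟩ => ?_⟩
    · rw [← hP, b.sum_repr]
    · refine sub_eq_zero.1 (mvPolynomial_eq_zero_of_eval_intCast fun n => ?_)
      rw [map_sub, ← hP, hQ, sub_eq_zero]
      simp only [b.repr_sum_self]
  · rintro ⟨P, ⟨hPd, hP⟩, -⟩
    have coord_deg (i : ι) : IsPolyDeg 1 (fun x => (b.repr x i : R)) :=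
      IsPolyDeg.of_addMonoidHom ((Int.castAddHom R).comp (b.coord i).toAddMonoidHom)
    rw [funext hP]
    exact (IsPolyDeg.eval_mvPolynomial coord_deg P).mono hPd

/-- A function `f : ℤ^r → ℚ` is a polynomial map of degree `≤ d` iff it is given by
evaluating a (unique) multivariate polynomial over `ℚ` of total degree `≤ d` in
the coordinates. -/
theorem isPolyDeg_iff_mvPolynomial (r : ℕ) (f : (Fin r → ℤ) → ℚ) (d : ℕ) :
    IsPolyDeg d f ↔ ∃! P : MvPolynomial (Fin r) ℚ,
      P.totalDegree ≤ d ∧ ∀ x : Fin r → ℤ, f x = MvPolynomial.eval (fun i => (x i : ℚ)) P := by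
  simpa only [Pi.basisFun_repr] using
    isPolyDeg_iff_mvPolynomial_general (Pi.basisFun ℤ (Fin r)) f d
end

section
/- For every function f : ℤ → ℤ and every n : ℕ, f is a polynomial map of degree ≤ n if and only if there exist integers c_0, c_1, …, c_n such that f(x) = Σ_{k=0}^{n} c_k · (x choose k) for all x ∈ ℤ, where (x choose k) denotes the integer binomial coefficient x(x−1)⋯(x−k+1)/k! of x ∈ ℤ; moreover the integers c_0, …, c_n are uniquely determined by f. In other words, the ring of polynomial maps ℤ → ℤ is the free abelian group on the binomial coefficient functions. -/
/-!
For `f : ℤ → B`, being polynomial is detected by the single difference `D_1`, because `1` generates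
`ℤ` and polynomial maps form a translation-invariant additive group. Pascal's rule says that `D_1`
deletes the constant coefficient `c₀` of `∑ k, (x choose k) • c k` and shifts the others down, while
`c₀` is the value at `0`; and a map on `ℤ` is determined by `D_1 f` and `f 0`. So both the existence
and the uniqueness of the coefficients follow by induction on the degree.
-/

section DifferenceOperator

variable {A B : Type*} [AddCommGroup A] [AddCommGroup B]

/-- The difference operator `D_a` as an additive endomorphism of the group of maps `A → B`. -/
def dOpHom (a : A) : (A → B) →+ (A → B) :=
  AddMonoidHom.mk' (DOp a) fun f g => funext fun x => add_sub_add_comm (f (a + x)) (g (a + x)) _ _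

theorem dOp_zero (f : A → B) : DOp 0 f = 0 := by
  funext x
  simp [DOp]

theorem dOp_add (a b : A) (f : A → B) :
    DOp (a + b) f = (fun x => DOp a f (b + x)) + DOp b f := by
  funext x
  simp [DOp, add_assoc]

theorem dOp_neg (a : A) (f : A → B) : DOp (-a) f = -fun x => DOp a f (-a + x) := by
  funext x
  simp [DOp]

theorem dOp_comp_add_left (a b : A) (f : A → B) :
    DOp a (fun x => f (b + x)) = fun x => DOp a f (b + x) := by
  funext x
  simp only [DOp, add_left_comm]

end DifferenceOperator

section PolynomialMaps

variable {A B : Type*} [AddCommGroup A] [AddCommGroup B]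

variable (A B) in
/-- The additive group of polynomial maps `A → B` of degree `< m`. The strict bound lets the
recursion start at the zero group, constant maps being those of degree `< 1`. -/
def polyDegLT : ℕ → AddSubgroup (A → B)
  | 0 => ⊥
  | m + 1 => ⨅ a, (polyDegLT m).comap (dOpHom a)

theorem mem_polyDegLT_succ {m : ℕ} {f : A → B} :
    f ∈ polyDegLT A B (m + 1) ↔ ∀ a, DOp a f ∈ polyDegLT A B m :=
  AddSubgroup.mem_iInf

theorem isPolyDeg_iff_mem_polyDegLT {n : ℕ} {f : A → B} :
    IsPolyDeg n f ↔ f ∈ polyDegLT A B (n + 1) := by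
  induction n generalizing f with
  | zero =>
    rw [mem_polyDegLT_succ]
    exact forall_congr' fun _ => funext_iff.symm
  | succ n ih => exact (forall_congr' fun _ => ih).trans mem_polyDegLT_succ.symm

theorem comp_add_left_mem_polyDegLT {m : ℕ} {f : A → B} (hf : f ∈ polyDegLT A B m) (b : A) :
    (fun x => f (b + x)) ∈ polyDegLT A B m := by
  induction m generalizing f with
  | zero => exact funext fun x => congrFun hf (b + x)
  | succ m ih =>
    refine mem_polyDegLT_succ.2 fun a => ?_
    rw [dOp_comp_add_left]
    exact ih (mem_polyDegLT_succ.1 hf a)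

theorem mem_polyDegLT_succ_iff_of_closure_eq_top {S : Set A} (hS : AddSubgroup.closure S = ⊤)
    {m : ℕ} {f : A → B} :
    f ∈ polyDegLT A B (m + 1) ↔ ∀ a ∈ S, DOp a f ∈ polyDegLT A B m := by
  refine mem_polyDegLT_succ.trans ⟨fun hf a _ => hf a, fun hf a => ?_⟩
  have ha : a ∈ AddSubgroup.closure S := hS ▸ AddSubgroup.mem_top a
  induction ha using AddSubgroup.closure_induction with
  | mem a ha => exact hf a ha
  | zero =>
    rw [dOp_zero]
    exact zero_mem _
  | add a b _ _ iha ihb =>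
    rw [dOp_add]
    exact add_mem (comp_add_left_mem_polyDegLT iha b) ihb
  | neg a _ iha =>
    rw [dOp_neg]
    exact neg_mem (comp_add_left_mem_polyDegLT iha (-a))

theorem eq_of_dOp_eq_of_closure_eq_top {S : Set A} (hS : AddSubgroup.closure S = ⊤) {f g : A → B}
    (h : ∀ a ∈ S, DOp a f = DOp a g) (h0 : f 0 = g 0) : f = g := by
  have hconst : f - g ∈ polyDegLT A B 1 :=
    (mem_polyDegLT_succ_iff_of_closure_eq_top hS).2 fun a ha =>
      (map_sub (dOpHom a) f g).trans (sub_eq_zero.2 (h a ha))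
  funext x
  have hx : DOp x (f - g) 0 = 0 := congrFun (mem_polyDegLT_succ.1 hconst x) 0
  simpa [DOp, h0, sub_eq_zero] using hx

end PolynomialMaps

section NewtonSum

variable {R B : Type*} [Ring R] [BinomialRing R] [AddCommGroup B] [Module R B] {m : ℕ}

variable (R) in
/-- The combination of the binomial coefficient functions `x ↦ (x choose k)`, `k < m`, with
coefficients `c k` in a module over the binomial ring `R`. -/
def newtonSum (c : Fin m → B) (x : R) : B :=
  ∑ k : Fin m, Ring.choose x (k : ℕ) • c k

theorem newtonSum_apply_zero (c : Fin (m + 1) → B) : newtonSum R c 0 = c 0 := by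
  simp [newtonSum, Fin.sum_univ_succ, Ring.choose_zero_succ]

theorem choose_one_add_sub_choose_succ (x : R) (k : ℕ) :
    Ring.choose (1 + x) (k + 1) - Ring.choose x (k + 1) = Ring.choose x k := by
  rw [add_comm 1 x, Ring.choose_succ_succ, add_sub_cancel_right]

theorem dOp_one_newtonSum (c : Fin (m + 1) → B) :
    DOp 1 (newtonSum R c) = newtonSum R (Fin.tail c) := by
  funext x
  calc DOp 1 (newtonSum R c) x
      = ∑ k : Fin (m + 1), (Ring.choose (1 + x) (k : ℕ) - Ring.choose x (k : ℕ)) • c k := by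
        simp only [DOp, newtonSum, sub_smul, Finset.sum_sub_distrib]
    _ = newtonSum R (Fin.tail c) x := by
        simp [newtonSum, Fin.tail, Fin.sum_univ_succ, choose_one_add_sub_choose_succ]

theorem newtonSum_injective : Function.Injective (newtonSum R : (Fin m → B) → R → B) := by
  induction m with
  | zero => exact Function.injective_of_subsingleton _
  | succ m ih =>
    intro c d h
    have hhead : c 0 = d 0 := by
      rw [← newtonSum_apply_zero (R := R) c, h, newtonSum_apply_zero]
    have htail : Fin.tail c = Fin.tail d :=
      ih (by rw [← dOp_one_newtonSum, h, dOp_one_newtonSum])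
    rw [← Fin.cons_self_tail c, ← Fin.cons_self_tail d, hhead, htail]

end NewtonSum

section Integers

variable {B : Type*} [AddCommGroup B] {m : ℕ} {f : ℤ → B}

theorem mem_polyDegLT_succ_iff_dOp_one :
    f ∈ polyDegLT ℤ B (m + 1) ↔ DOp 1 f ∈ polyDegLT ℤ B m := by
  simpa only [Set.mem_singleton_iff, forall_eq] using
    mem_polyDegLT_succ_iff_of_closure_eq_top Int.addSubgroupClosure_one

theorem eq_of_dOp_one_eq {g : ℤ → B} (h : DOp 1 f = DOp 1 g) (h0 : f 0 = g 0) : f = g :=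
  eq_of_dOp_eq_of_closure_eq_top Int.addSubgroupClosure_one
    (by simpa only [Set.mem_singleton_iff, forall_eq] using h) h0

theorem mem_polyDegLT_iff_exists_newtonSum :
    f ∈ polyDegLT ℤ B m ↔ ∃ c : Fin m → B, f = newtonSum ℤ c := by
  induction m generalizing f with
  | zero =>
    have hempty (c : Fin 0 → B) : newtonSum ℤ c = 0 := funext fun _ => Fin.sum_univ_zero _
    simp [polyDegLT, hempty]
  | succ m ih =>
    rw [mem_polyDegLT_succ_iff_dOp_one, ih]
    constructor
    · rintro ⟨c, hc⟩
      refine ⟨Fin.cons (f 0) c, eq_of_dOp_one_eq ?_ ?_⟩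
      · rw [hc, dOp_one_newtonSum, Fin.tail_cons]
      · rw [newtonSum_apply_zero, Fin.cons_zero]
    · rintro ⟨c, rfl⟩
      exact ⟨Fin.tail c, dOp_one_newtonSum c⟩

end Integers

theorem isPolyDeg_int_iff_binomial_general {B : Type*} [AddCommGroup B] (f : ℤ → B) (n : ℕ) :
    IsPolyDeg n f ↔ ∃! c : Fin (n + 1) → B,
      ∀ x : ℤ, f x = ∑ k : Fin (n + 1), Ring.choose x (k : ℕ) • c k := by
  have hnewton (c : Fin (n + 1) → B) :
      (∀ x : ℤ, f x = ∑ k : Fin (n + 1), Ring.choose x (k : ℕ) • c k) ↔ f = newtonSum ℤ c :=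
    funext_iff.symm
  simp only [hnewton]
  rw [isPolyDeg_iff_mem_polyDegLT, mem_polyDegLT_iff_exists_newtonSum]
  refine ⟨?_, ExistsUnique.exists⟩
  rintro ⟨c, rfl⟩
  exact ⟨c, rfl, fun _ hd => newtonSum_injective hd.symm⟩

/-- A function `f : ℤ → ℤ` is a polynomial map of degree `≤ n` iff it is a (unique)
integral linear combination `f x = ∑_{k=0}^{n} c_k * (x choose k)` of the binomial
coefficient functions. -/
theorem isPolyDeg_int_iff_binomial (f : ℤ → ℤ) (n : ℕ) :
    IsPolyDeg n f ↔ ∃! c : Fin (n + 1) → ℤ,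
      ∀ x : ℤ, f x = ∑ k : Fin (n + 1), c k * Ring.choose x (k : ℕ) := by
  simpa only [smul_eq_mul, mul_comm] using isPolyDeg_int_iff_binomial_general f n
end
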